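/- Let a_1, …, a_m ∈ [0, 1] be real numbers. Then Σ_{t=1}^{m} a_t / √(1 + a_1 + ⋯ + a_{t−1}) ≤ 2·√(1 + a_1 + ⋯ + a_m) − 1. -/

import Mathlib

open Finset

/-!
For an antitone `f` and a step `[u, v]` of length at most `c`, replacing the left endpoint value
`f u` by `f v` costs at most `c * (f u - f v)` and leaves `(v - u) * f v ≤ ∫ x in u..v, f x`. Summed
over consecutive steps, the costs telescope and the integrals add up. The theorem is the case
`f x = 1 / √x`, with the partial sums `1 + a_1 + ⋯ + a_{t-1}` as endpoints of the steps.
-/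

section LeftRiemannSum

variable {f : ℝ → ℝ} {c : ℝ}

theorem sub_mul_right_le_integral_of_antitoneOn {u v : ℝ} (huv : u ≤ v)
    (hf : AntitoneOn f (Set.Icc u v)) : (v - u) * f v ≤ ∫ x in u..v, f x := by
  have hint : IntervalIntegrable f MeasureTheory.volume u v :=
    AntitoneOn.intervalIntegrable (by rwa [Set.uIcc_of_le huv])
  calc (v - u) * f v = ∫ _ in u..v, f v := by simp
    _ ≤ ∫ x in u..v, f x :=
      intervalIntegral.integral_mono_on huv intervalIntegrable_const hint
        fun x hx => hf hx (Set.right_mem_Icc.mpr huv) hx.2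

theorem sub_mul_left_le_integral_add_of_antitoneOn {u v : ℝ} (huv : u ≤ v) (hc : v - u ≤ c)
    (hf : AntitoneOn f (Set.Icc u v)) :
    (v - u) * f u ≤ (∫ x in u..v, f x) + c * (f u - f v) := by
  have hfvu : f v ≤ f u := hf (Set.left_mem_Icc.mpr huv) (Set.right_mem_Icc.mpr huv) huv
  calc (v - u) * f u = (v - u) * f v + (v - u) * (f u - f v) := by ring
    _ ≤ (∫ x in u..v, f x) + c * (f u - f v) :=
      add_le_add (sub_mul_right_le_integral_of_antitoneOn huv hf)
        (mul_le_mul_of_nonneg_right hc (sub_nonneg.mpr hfvu))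

theorem sum_sub_mul_left_le_integral_add_of_antitoneOn {s : ℕ → ℝ} {p q : ℕ} (hpq : p ≤ q)
    (hs : MonotoneOn s (Set.Icc p q)) (hc : ∀ t ∈ Ico p q, s (t + 1) - s t ≤ c)
    (hf : AntitoneOn f (Set.Icc (s p) (s q))) :
    ∑ t ∈ Ico p q, (s (t + 1) - s t) * f (s t)
      ≤ (∫ x in s p..s q, f x) + c * (f (s p) - f (s q)) := by
  have hstep : ∀ t ∈ Ico p q, s t ≤ s (t + 1) ∧ AntitoneOn f (Set.Icc (s t) (s (t + 1))) := by
    intro t ht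
    obtain ⟨hpt, htq⟩ := mem_Ico.mp ht
    have hst : t ∈ Set.Icc p q := ⟨hpt, htq.le⟩
    have hst' : t + 1 ∈ Set.Icc p q := ⟨hpt.trans t.le_succ, htq⟩
    exact ⟨hs hst hst' t.le_succ, hf.mono <| Set.Icc_subset_Icc
      (hs (Set.left_mem_Icc.mpr hpq) hst hpt) (hs hst' (Set.right_mem_Icc.mpr hpq) htq)⟩
  have hint : ∀ t ∈ Set.Ico p q,
      IntervalIntegrable f MeasureTheory.volume (s t) (s (t + 1)) := by
    intro t ht
    obtain ⟨hle, hanti⟩ := hstep t (mem_Ico.mpr ht)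
    exact AntitoneOn.intervalIntegrable (by rwa [Set.uIcc_of_le hle])
  have htelescope : ∑ t ∈ Ico p q, (f (s t) - f (s (t + 1))) = f (s p) - f (s q) := by
    rw [← neg_inj, ← sum_neg_distrib]
    simpa only [neg_sub] using sum_Ico_sub (fun t => f (s t)) hpq
  calc ∑ t ∈ Ico p q, (s (t + 1) - s t) * f (s t)
      ≤ ∑ t ∈ Ico p q, ((∫ x in s t..s (t + 1), f x) + c * (f (s t) - f (s (t + 1)))) :=
        sum_le_sum fun t ht =>
          sub_mul_left_le_integral_add_of_antitoneOn (hstep t ht).1 (hc t ht) (hstep t ht).2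
    _ = (∫ x in s p..s q, f x) + c * (f (s p) - f (s q)) := by
        rw [sum_add_distrib, intervalIntegral.sum_integral_adjacent_intervals_Ico hpq hint,
          ← mul_sum, htelescope]

end LeftRiemannSum

theorem antitoneOn_inv_sqrt : AntitoneOn (fun x : ℝ => (√x)⁻¹) (Set.Ioi 0) :=
  fun _ hx _ _ hxy => inv_anti₀ (Real.sqrt_pos.mpr hx) (Real.sqrt_le_sqrt hxy)

theorem integral_inv_sqrt {u v : ℝ} (hu : 0 ≤ u) (hv : 0 ≤ v) :
    ∫ x in u..v, (√x)⁻¹ = 2 * (√v - √u) := by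
  have hrpow : Set.EqOn (fun x : ℝ => (√x)⁻¹) (fun x => x ^ (-(1 / 2) : ℝ)) (Set.uIcc u v) :=
    fun x hx => by
      simp only [Real.sqrt_eq_rpow, Real.rpow_neg ((le_min hu hv).trans hx.1)]
  rw [intervalIntegral.integral_congr hrpow, integral_rpow (Or.inl (by norm_num)),
    Real.sqrt_eq_rpow, Real.sqrt_eq_rpow]
  ring_nf

theorem sum_div_sqrt_partial_sums_general (m : ℕ) (a : ℕ → ℝ) {s c : ℝ} (hs : 0 < s)
    (ha : ∀ t, 1 ≤ t → t ≤ m → a t ∈ Set.Icc 0 c) :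
    ∑ t ∈ Icc 1 m, a t / √(s + ∑ j ∈ Ico 1 t, a j)
      ≤ 2 * (√(s + ∑ j ∈ Icc 1 m, a j) - √s)
        + c * ((√s)⁻¹ - (√(s + ∑ j ∈ Icc 1 m, a j))⁻¹) := by
  set S : ℕ → ℝ := fun t => s + ∑ j ∈ Ico 1 t, a j
  have hS_one : S 1 = s := by simp [S]
  have hS_sub : ∀ t, 1 ≤ t → S (t + 1) - S t = a t := fun t ht => by
    simp [S, sum_Ico_succ_top ht]
  have hS_mono : MonotoneOn S (Set.Icc 1 (m + 1)) :=
    monotoneOn_of_le_add_one Set.ordConnected_Icc fun t _ ht ht' =>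
      sub_nonneg.mp <| (hS_sub t ht.1).symm ▸ (ha t ht.1 (Nat.le_of_succ_le_succ ht'.2)).1
  have hS_step : ∀ t ∈ Ico 1 (m + 1), S (t + 1) - S t ≤ c := fun t ht => by
    obtain ⟨h1t, htm⟩ := mem_Ico.mp ht
    exact (hS_sub t h1t).trans_le (ha t h1t (Nat.le_of_lt_succ htm)).2
  have hS_le : s ≤ S (m + 1) :=
    hS_one.symm.trans_le (hS_mono (by simp) (by simp) (by simp))
  have hanti : AntitoneOn (fun x : ℝ => (√x)⁻¹) (Set.Icc (S 1) (S (m + 1))) :=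
    antitoneOn_inv_sqrt.mono fun x hx => hs.trans_le (hS_one.symm.trans_le hx.1)
  rw [← Ico_add_one_right_eq_Icc]
  calc ∑ t ∈ Ico 1 (m + 1), a t / √(S t)
      = ∑ t ∈ Ico 1 (m + 1), (S (t + 1) - S t) * (√(S t))⁻¹ :=
        sum_congr rfl fun t ht => by rw [hS_sub t (mem_Ico.mp ht).1, div_eq_mul_inv]
    _ ≤ (∫ x in S 1..S (m + 1), (√x)⁻¹) + c * ((√(S 1))⁻¹ - (√(S (m + 1)))⁻¹) :=
        sum_sub_mul_left_le_integral_add_of_antitoneOn (by simp) hS_mono hS_step hanti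
    _ = 2 * (√(S (m + 1)) - √s) + c * ((√s)⁻¹ - (√(S (m + 1)))⁻¹) := by
        rw [hS_one, integral_inv_sqrt hs.le (hs.le.trans hS_le)]

/-- For `a_1, …, a_m ∈ [0,1]`,
`Σ_{t=1}^m a_t / √(1 + a_1 + ⋯ + a_{t−1}) ≤ 2·√(1 + a_1 + ⋯ + a_m) − 1`. -/
theorem sum_div_sqrt_partial_sums (m : ℕ) (a : ℕ → ℝ)
    (ha : ∀ t, 1 ≤ t → t ≤ m → a t ∈ Set.Icc (0 : ℝ) 1) :
    ∑ t ∈ Icc 1 m, a t / Real.sqrt (1 + ∑ j ∈ Ico 1 t, a j)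
      ≤ 2 * Real.sqrt (1 + ∑ j ∈ Icc 1 m, a j) - 1 := by
  have hgeneral := sum_div_sqrt_partial_sums_general m a one_pos ha
  rw [Real.sqrt_one, inv_one] at hgeneral
  linarith [inv_nonneg.mpr (Real.sqrt_nonneg (1 + ∑ j ∈ Icc 1 m, a j))]
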